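/- Under the hypotheses of the Galerkin a priori estimate — μ ≥ 0; S : ℤ³ → ℂ with S(k,m,n) = 0 whenever kmn = 0, S(k,m,n) = S(k,n,m), S(k,m,n) = S(m,n,k), S(k,m,n) = conj(S(−k,−m,−n)), and |S(k,m,n)| ≤ C·min{|k|^μ, |m|^μ, |n|^μ}; s > μ + 3/2; K_s = C·C_s·M_{s−μ−1} with C_s a constant such that |k|k|^{2s} + m|m|^{2s} + n|n|^{2s}| ≤ C_s(|k|^s|m|^s|n| + |n|^s|k|^s|m| + |m|^s|n|^s|k|) for all real k,m,n with k+m+n = 0, and M_σ = (2 Σ_{n=1}^∞ n^{−2σ})^{1/2} — suppose û : ℤ × ℝ → ℂ is differentiable in t, supported in |k| ≤ N, with û(0,t) = 0 and û(−k,t) = conj(û(k,t)), and solves ∂_t û(k,t) + ik Σ_{n∈ℤ} S(−k, k−n, n) û(k−n,t) û(n,t) = 0 for |k| ≤ N. Let g denote the initial data û(·,0). Then for every t with |t| < 1/(K_s ‖g‖_s), the solution satisfies ‖u(t)‖_s ≤ ‖g‖_s / (1 − K_s ‖g‖_s |t|); in particular the Galerkin approximation exists on the whole interval |t| < 1/(K_s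 ‖g‖_s). -/

import Mathlib

open scoped BigOperators

/-- The homogeneous Sobolev norm of order `s` of a Fourier coefficient sequence. -/
noncomputable def hnorm (s : ℝ) (u : ℤ → ℂ) : ℝ :=
  (∑' k : ℤ, |(k : ℝ)| ^ (2 * s) * ‖u k‖ ^ 2) ^ ((1 : ℝ) / 2)

/-- `M_σ = (2 Σ_{n=1}^∞ n^{−2σ})^{1/2}`. -/
noncomputable def Mconst (σ : ℝ) : ℝ :=
  Real.sqrt (2 * ∑' n : ℕ, ((n : ℝ) + 1) ^ (-(2 * σ)))

/-!
Testing the equation against `|k|^{2s} û(-k)` expresses the time derivative of the energy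
`‖u‖_s²` as a sum over triads `a + b + c = 0`, weighted by `a|a|^{2s}`. Since the kernel is
cyclic, the weight may be replaced by its average over the rotations of the triad, and the
cancellation in `a|a|^{2s} + b|b|^{2s} + c|c|^{2s}` moves one derivative onto a single factor.
That factor is summed by Cauchy-Schwarz, the other two by Young's inequality, which gives the
Riccati inequality `|d/dt ‖u‖_s| ≤ K_s ‖u‖_s²`.
-/

section Triads

variable {G : Type*} [AddCommGroup G] [DecidableEq G]

/-- The triads of interacting modes: triples of elements of `F` with sum zero, encoded as nested
pairs. -/
def triads (F : Finset G) : Finset (G × G × G) :=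
  (F ×ˢ F ×ˢ F).filter fun p => p.1 + p.2.1 + p.2.2 = 0

variable {F : Finset G}

lemma mem_triads {a b c : G} : (a, b, c) ∈ triads F ↔ (a ∈ F ∧ b ∈ F ∧ c ∈ F) ∧ a + b + c = 0 := by
  simp only [triads, Finset.mem_filter, Finset.mem_product]

lemma sum_triads_rotate {M : Type*} [AddCommMonoid M] (f : G → G → G → M) :
    ∑ p ∈ triads F, f p.2.1 p.2.2 p.1 = ∑ p ∈ triads F, f p.1 p.2.1 p.2.2 := by
  refine Finset.sum_nbij' (fun p => (p.2.1, p.2.2, p.1)) (fun p => (p.2.2, p.1, p.2.1)) ?_ ?_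
    (fun _ _ => rfl) (fun _ _ => rfl) (fun _ _ => rfl)
  · rintro ⟨a, b, c⟩ h
    rw [mem_triads] at h ⊢
    exact ⟨⟨h.1.2.1, h.1.2.2, h.1.1⟩, by rw [← h.2]; abel⟩
  · rintro ⟨a, b, c⟩ h
    rw [mem_triads] at h ⊢
    exact ⟨⟨h.1.2.2, h.1.1, h.1.2.1⟩, by rw [← h.2]; abel⟩

lemma sum_triads_add_rotations {R : Type*} [Semiring R] (f : G → G → G → R) :
    ∑ p ∈ triads F, (f p.1 p.2.1 p.2.2 + f p.2.1 p.2.2 p.1 + f p.2.2 p.1 p.2.1) =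
      3 * ∑ p ∈ triads F, f p.1 p.2.1 p.2.2 := by
  have rotate_twice := sum_triads_rotate (F := F) fun a b c => f b c a
  simp only [Finset.sum_add_distrib, rotate_twice, sum_triads_rotate f]
  rw [← two_mul, ← add_one_mul, two_add_one_eq_three]

lemma sum_triads_eq_sum_sum {M : Type*} [AddCommMonoid M] {f : G → G → G → M}
    (hf : ∀ a b c, b ∉ F → f a b c = 0) :
    ∑ p ∈ triads F, f p.1 p.2.1 p.2.2 = ∑ a ∈ F, ∑ c ∈ F, f a (-a - c) c := by
  have solve_middle (a b c : G) : a + b + c = 0 ↔ b = -a - c := by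
    rw [eq_sub_iff_add_eq, add_assoc, add_eq_zero_iff_eq_neg']
  simp only [triads, Finset.sum_filter, Finset.sum_product, solve_middle]
  refine Finset.sum_congr rfl fun a _ => ?_
  rw [Finset.sum_comm]
  refine Finset.sum_congr rfl fun c _ => ?_
  rw [Finset.sum_ite_eq', ite_eq_left_iff]
  exact fun h => (hf _ _ _ h).symm

lemma sum_triads_le_sum_mul_sum {x y : G → ℝ} (hx : ∀ a, 0 ≤ x a) (hy : ∀ b, 0 ≤ y b) :
    ∑ p ∈ triads F, x p.1 * y p.2.1 ≤ (∑ a ∈ F, x a) * ∑ b ∈ F, y b := by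
  have proj_injOn : Set.InjOn (fun p : G × G × G => (p.1, p.2.1)) (triads F) := by
    rintro ⟨a, b, c⟩ h ⟨a', b', c'⟩ h' heq
    obtain ⟨rfl, rfl⟩ := Prod.mk.inj heq
    have hc := (mem_triads.1 h).2.trans (mem_triads.1 h').2.symm
    rw [add_left_cancel hc]
  rw [Finset.sum_mul_sum, ← Finset.sum_product', ← Finset.sum_image (f := fun q => x q.1 * y q.2)
    proj_injOn]
  refine Finset.sum_le_sum_of_subset_of_nonneg ?_ fun q _ _ => mul_nonneg (hx _) (hy _)
  rintro _ h
  obtain ⟨⟨a, b, c⟩, hp, rfl⟩ := Finset.mem_image.1 h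
  exact Finset.mk_mem_product (mem_triads.1 hp).1.1 (mem_triads.1 hp).1.2.1

lemma sum_triads_mul_mul_le (x : G → ℝ) {y : G → ℝ} (hy : ∀ c, 0 ≤ y c) :
    ∑ p ∈ triads F, y p.2.2 * (x p.1 * x p.2.1) ≤ (∑ c ∈ F, y c) * ∑ a ∈ F, x a ^ 2 := by
  have hx : ∀ a, 0 ≤ x a ^ 2 := fun a => sq_nonneg _
  have first_factor_le : ∑ p ∈ triads F, y p.2.2 * x p.1 ^ 2 ≤
      (∑ c ∈ F, y c) * ∑ a ∈ F, x a ^ 2 := by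
    rw [sum_triads_rotate fun _ b c => y b * x c ^ 2, sum_triads_rotate fun a b _ => y a * x b ^ 2]
    exact sum_triads_le_sum_mul_sum hy hx
  have second_factor_le : ∑ p ∈ triads F, y p.2.2 * x p.2.1 ^ 2 ≤
      (∑ c ∈ F, y c) * ∑ a ∈ F, x a ^ 2 := by
    rw [mul_comm, sum_triads_rotate fun a b _ => y b * x a ^ 2]
    simpa only [mul_comm] using sum_triads_le_sum_mul_sum hx hy
  calc ∑ p ∈ triads F, y p.2.2 * (x p.1 * x p.2.1)
      ≤ ∑ p ∈ triads F, (y p.2.2 * x p.1 ^ 2 + y p.2.2 * x p.2.1 ^ 2) / 2 := by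
        refine Finset.sum_le_sum fun p _ => ?_
        nlinarith [mul_nonneg (hy p.2.2) (sq_nonneg (x p.1 - x p.2.1))]
    _ ≤ (∑ c ∈ F, y c) * ∑ a ∈ F, x a ^ 2 := by
        rw [← Finset.sum_div, Finset.sum_add_distrib]
        linarith

end Triads

section SobolevEnergy

/-- The contribution of the modes in `F` to `‖v‖_s²`. -/
noncomputable def sobolevEnergy (F : Finset ℤ) (s : ℝ) (v : ℤ → ℂ) : ℝ :=
  ∑ k ∈ F, |(k : ℝ)| ^ (2 * s) * ‖v k‖ ^ 2

variable {F : Finset ℤ} {s : ℝ} {v : ℤ → ℂ}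

lemma sobolevEnergy_nonneg : 0 ≤ sobolevEnergy F s v :=
  Finset.sum_nonneg fun _ _ => by positivity

lemma abs_rpow_two_mul (x r : ℝ) : |x| ^ (2 * r) = (|x| ^ r) ^ 2 := by
  rw [mul_comm, ← Nat.cast_two, Real.rpow_mul_natCast (abs_nonneg x)]

lemma sobolevEnergy_eq_sum_sq :
    sobolevEnergy F s v = ∑ k ∈ F, (|(k : ℝ)| ^ s * ‖v k‖) ^ 2 := by
  simp only [sobolevEnergy, mul_pow, abs_rpow_two_mul]

lemma hnorm_eq_sqrt_sobolevEnergy (hv : ∀ k ∉ F, v k = 0) :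
    hnorm s v = √(sobolevEnergy F s v) := by
  rw [hnorm, ← Real.sqrt_eq_rpow, sobolevEnergy, tsum_eq_sum fun k hk => by simp [hv k hk]]

lemma hasSum_abs_rpow_Mconst_sq {σ : ℝ} (hσ : 1 / 2 < σ) :
    HasSum (fun c : ℤ => |(c : ℝ)| ^ (-(2 * σ))) (Mconst σ ^ 2) := by
  have summable : Summable fun n : ℕ => ((n : ℝ) + 1) ^ (-(2 * σ)) := by
    simpa using (summable_nat_add_iff 1).2
      ((Real.summable_nat_rpow (p := -(2 * σ))).2 (by linarith))
  have abs_succ (n : ℕ) : |(n : ℝ) + 1| = n + 1 := abs_of_nonneg (by positivity)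
  have abs_neg_succ (n : ℕ) : |-1 + -(n : ℝ)| = n + 1 := by
    rw [← neg_add, abs_neg, add_comm, abs_succ]
  have zero_mode : |((0 : ℤ) : ℝ)| ^ (-(2 * σ)) = 0 := by
    rw [Int.cast_zero, abs_zero, Real.zero_rpow (by linarith)]
  convert HasSum.of_add_one_of_neg_add_one (f := fun c : ℤ => |(c : ℝ)| ^ (-(2 * σ)))
    (by simpa [abs_succ] using summable.hasSum) (by simpa [abs_neg_succ] using summable.hasSum)
    using 1
  rw [zero_mode, Mconst, Real.sq_sqrt (by positivity)]
  ring

lemma sum_rpow_mul_norm_le_Mconst_mul_sqrt {r : ℝ} (hr : 1 / 2 < s - r) (hv : v 0 = 0) :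
    ∑ c ∈ F, |(c : ℝ)| ^ r * ‖v c‖ ≤ Mconst (s - r) * √(sobolevEnergy F s v) := by
  have split_weight (c : ℤ) :
      |(c : ℝ)| ^ r * ‖v c‖ = |(c : ℝ)| ^ (-(s - r)) * (|(c : ℝ)| ^ s * ‖v c‖) := by
    rcases eq_or_ne c 0 with rfl | hc
    · simp only [hv, norm_zero, mul_zero]
    · rw [← mul_assoc, ← Real.rpow_add (by positivity), neg_sub, sub_add_cancel]
  have weights_le : ∑ c ∈ F, (|(c : ℝ)| ^ (-(s - r))) ^ 2 ≤ Mconst (s - r) ^ 2 := by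
    simp only [← abs_rpow_two_mul, mul_neg]
    exact sum_le_hasSum F (fun _ _ => by positivity) (hasSum_abs_rpow_Mconst_sq hr)
  calc ∑ c ∈ F, |(c : ℝ)| ^ r * ‖v c‖
      = ∑ c ∈ F, |(c : ℝ)| ^ (-(s - r)) * (|(c : ℝ)| ^ s * ‖v c‖) :=
        Finset.sum_congr rfl fun c _ => split_weight c
    _ ≤ √(∑ c ∈ F, (|(c : ℝ)| ^ (-(s - r))) ^ 2) * √(sobolevEnergy F s v) := by
        rw [sobolevEnergy_eq_sum_sq]
        exact Real.sum_mul_le_sqrt_mul_sqrt _ _ _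
    _ ≤ Mconst (s - r) * √(sobolevEnergy F s v) := by
        gcongr
        exact Real.sqrt_le_iff.2 ⟨Real.sqrt_nonneg _, weights_le⟩

end SobolevEnergy

section TriadForm

/-- The trilinear sum of `a|a|^{2s} S(a,b,c) v(a) v(b) v(c)` over the triads in `F`, which governs
the growth of the energy. -/
noncomputable def triadForm (F : Finset ℤ) (S : ℤ → ℤ → ℤ → ℂ) (s : ℝ) (v : ℤ → ℂ) : ℂ :=
  ∑ p ∈ triads F, (((p.1 : ℝ) * |(p.1 : ℝ)| ^ (2 * s) : ℝ) : ℂ) *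
    (S p.1 p.2.1 p.2.2 * v p.1 * v p.2.1 * v p.2.2)

/-- `Cs` is an admissible constant `C_s` in the cancellation estimate for the weight `k|k|^{2s}`
on triads. -/
def IsTriadWeightBound (s Cs : ℝ) : Prop :=
  ∀ k m n : ℝ, k + m + n = 0 →
    |k * |k| ^ (2 * s) + m * |m| ^ (2 * s) + n * |n| ^ (2 * s)| ≤
      Cs * (|k| ^ s * |m| ^ s * |n| + |n| ^ s * |k| ^ s * |m| + |m| ^ s * |n| ^ s * |k|)

lemma IsTriadWeightBound.nonneg {s Cs : ℝ} (hCs : IsTriadWeightBound s Cs) : 0 ≤ Cs :=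
  nonneg_of_mul_nonneg_left ((abs_nonneg _).trans (hCs 1 1 (-2) (by norm_num)))
    (by positivity)

lemma nonneg_of_norm_le_mul_rpow {S : ℤ → ℤ → ℤ → ℂ} {C μ : ℝ}
    (hSbound : ∀ k m n : ℤ, ‖S k m n‖ ≤ C * |(n : ℝ)| ^ μ) : 0 ≤ C := by
  simpa using (norm_nonneg _).trans (hSbound 1 1 1)

variable {F : Finset ℤ} {S : ℤ → ℤ → ℤ → ℂ} {C μ s Cs : ℝ} {v : ℤ → ℂ}

lemma norm_triadForm_le_sum (hScyc : ∀ k m n, S k m n = S m n k)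
    (hCs : IsTriadWeightBound s Cs) :
    ‖triadForm F S s v‖ ≤ Cs * ∑ p ∈ triads F, |(p.1 : ℝ)| ^ s * |(p.2.1 : ℝ)| ^ s *
      |(p.2.2 : ℝ)| * ‖S p.1 p.2.1 p.2.2 * v p.1 * v p.2.1 * v p.2.2‖ := by
  set w : ℤ → ℝ := fun a => (a : ℝ) * |(a : ℝ)| ^ (2 * s)
  set I : ℤ → ℤ → ℤ → ℂ := fun a b c => S a b c * v a * v b * v c with hI
  set f : ℤ → ℤ → ℤ → ℝ := fun a b c => |(a : ℝ)| ^ s * |(b : ℝ)| ^ s * |(c : ℝ)| * ‖I a b c‖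
    with hf
  have I_cyc (a b c : ℤ) : I b c a = I a b c := by
    simp only [hI, hScyc a b c]
    ring
  have symmetrized : 3 * triadForm F S s v =
      ∑ p ∈ triads F, ((w p.1 + w p.2.1 + w p.2.2 : ℝ) : ℂ) * I p.1 p.2.1 p.2.2 := by
    rw [triadForm, ← sum_triads_add_rotations fun a b c => (w a : ℂ) * I a b c]
    refine Finset.sum_congr rfl fun p _ => ?_
    rw [I_cyc p.1, ← I_cyc p.2.2]
    push_cast
    ring
  have termwise : ∀ p ∈ triads F,
      ‖((w p.1 + w p.2.1 + w p.2.2 : ℝ) : ℂ) * I p.1 p.2.1 p.2.2‖ ≤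
        Cs * (f p.1 p.2.1 p.2.2 + f p.2.1 p.2.2 p.1 + f p.2.2 p.1 p.2.1) := by
    rintro ⟨a, b, c⟩ hp
    rw [norm_mul, Complex.norm_real, Real.norm_eq_abs]
    refine (mul_le_mul_of_nonneg_right (hCs a b c (mod_cast (mem_triads.1 hp).2))
      (norm_nonneg _)).trans_eq ?_
    simp only [hf, I_cyc a b c, ← I_cyc c a b]
    ring
  have three_mul_le := norm_sum_le_of_le _ termwise
  rw [← symmetrized, ← Finset.mul_sum, sum_triads_add_rotations, norm_mul,
    Complex.norm_ofNat] at three_mul_le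
  linarith

lemma sum_triads_weight_mul_norm_le (hSbound : ∀ k m n : ℤ, ‖S k m n‖ ≤ C * |(n : ℝ)| ^ μ)
    (hv : v 0 = 0) :
    ∑ p ∈ triads F, |(p.1 : ℝ)| ^ s * |(p.2.1 : ℝ)| ^ s * |(p.2.2 : ℝ)| *
        ‖S p.1 p.2.1 p.2.2 * v p.1 * v p.2.1 * v p.2.2‖ ≤
      C * ((∑ c ∈ F, |(c : ℝ)| ^ (1 + μ) * ‖v c‖) * sobolevEnergy F s v) := by
  have rpow_one_add_mul (c : ℤ) :
      |(c : ℝ)| ^ (1 + μ) * ‖v c‖ = |(c : ℝ)| * |(c : ℝ)| ^ μ * ‖v c‖ := by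
    rcases eq_or_ne c 0 with rfl | hc
    · simp only [hv, norm_zero, mul_zero]
    · rw [Real.rpow_add (by positivity), Real.rpow_one]
  have termwise (a b c : ℤ) :
      |(a : ℝ)| ^ s * |(b : ℝ)| ^ s * |(c : ℝ)| * ‖S a b c * v a * v b * v c‖ ≤
        C * (|(c : ℝ)| ^ (1 + μ) * ‖v c‖ * (|(a : ℝ)| ^ s * ‖v a‖ * (|(b : ℝ)| ^ s * ‖v b‖))) := by
    simp only [rpow_one_add_mul, norm_mul]
    calc _ = ‖S a b c‖ *
          (|(c : ℝ)| * ‖v c‖ * (|(a : ℝ)| ^ s * ‖v a‖ * (|(b : ℝ)| ^ s * ‖v b‖))) := by ring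
      _ ≤ C * |(c : ℝ)| ^ μ *
          (|(c : ℝ)| * ‖v c‖ * (|(a : ℝ)| ^ s * ‖v a‖ * (|(b : ℝ)| ^ s * ‖v b‖))) := by
        gcongr
        exact hSbound a b c
      _ = _ := by ring
  refine (Finset.sum_le_sum fun p _ => termwise p.1 p.2.1 p.2.2).trans ?_
  rw [← Finset.mul_sum, sobolevEnergy_eq_sum_sq]
  exact mul_le_mul_of_nonneg_left
    (sum_triads_mul_mul_le (fun a : ℤ => |(a : ℝ)| ^ s * ‖v a‖)
      (y := fun c : ℤ => |(c : ℝ)| ^ (1 + μ) * ‖v c‖) fun _ => by positivity)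
    (nonneg_of_norm_le_mul_rpow hSbound)

lemma norm_triadForm_le (hScyc : ∀ k m n, S k m n = S m n k)
    (hSbound : ∀ k m n : ℤ, ‖S k m n‖ ≤ C * |(n : ℝ)| ^ μ) (hs : μ + 3 / 2 < s)
    (hCs : IsTriadWeightBound s Cs) (hv : v 0 = 0) :
    ‖triadForm F S s v‖ ≤
      C * Cs * Mconst (s - μ - 1) * (√(sobolevEnergy F s v) * sobolevEnergy F s v) := by
  have hC := nonneg_of_norm_le_mul_rpow hSbound
  have hCs_nonneg := hCs.nonneg
  have hE : 0 ≤ sobolevEnergy F s v := sobolevEnergy_nonneg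
  calc ‖triadForm F S s v‖
      ≤ Cs * (C * ((∑ c ∈ F, |(c : ℝ)| ^ (1 + μ) * ‖v c‖) * sobolevEnergy F s v)) :=
        (norm_triadForm_le_sum hScyc hCs).trans <|
          mul_le_mul_of_nonneg_left (sum_triads_weight_mul_norm_le hSbound hv) hCs_nonneg
    _ ≤ Cs * (C * (Mconst (s - (1 + μ)) * √(sobolevEnergy F s v) * sobolevEnergy F s v)) := by
        gcongr
        exact sum_rpow_mul_norm_le_Mconst_mul_sqrt (by linarith) hv
    _ = _ := by
        rw [← sub_sub, sub_right_comm]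
        ring

end TriadForm

section EnergyIdentity

/-- The right-hand side `∂_t û(k)` of the Galerkin system with interaction kernel `S`. -/
noncomputable def galerkinField (S : ℤ → ℤ → ℤ → ℂ) (v : ℤ → ℂ) (k : ℤ) : ℂ :=
  -(Complex.I * (k : ℂ) * ∑' n : ℤ, S (-k) (k - n) n * v (k - n) * v n)

variable {F : Finset ℤ} {S : ℤ → ℤ → ℤ → ℂ} {s : ℝ}

lemma I_mul_triadForm {v : ℤ → ℂ} (hF : ∀ k ∈ F, -k ∈ F) (hsupp : ∀ k ∉ F, v k = 0)
    (hconj : ∀ k, v (-k) = starRingEnd ℂ (v k)) :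
    Complex.I * triadForm F S s v =
      ∑ k ∈ F, ((|(k : ℝ)| ^ (2 * s) : ℝ) : ℂ) * (galerkinField S v k * starRingEnd ℂ (v k)) := by
  have field_eq (k : ℤ) : galerkinField S v k =
      -(Complex.I * (k : ℂ) * ∑ n ∈ F, S (-k) (k - n) n * v (k - n) * v n) := by
    rw [galerkinField, tsum_eq_sum fun n hn => by rw [hsupp n hn, mul_zero]]
  rw [triadForm, sum_triads_eq_sum_sum
    (f := fun a b c : ℤ => (((a : ℝ) * |(a : ℝ)| ^ (2 * s) : ℝ) : ℂ) * (S a b c * v a * v b * v c))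
    fun a b c hb => by rw [hsupp b hb]; ring, Finset.mul_sum]
  refine Finset.sum_nbij' (fun a => -a) (fun k => -k) hF hF (fun a _ => neg_neg a)
    (fun k _ => neg_neg k) fun a _ => ?_
  simp only [field_eq, ← hconj, neg_neg, Finset.mul_sum, Finset.sum_mul,
    ← Finset.sum_neg_distrib]
  refine Finset.sum_congr rfl fun c _ => ?_
  push_cast
  rw [abs_neg]
  ring

lemma hasDerivWithinAt_sobolevEnergy {u : ℝ → ℤ → ℂ} {J : Set ℝ} {t : ℝ}
    (hF : ∀ k ∈ F, -k ∈ F) (hsupp : ∀ k ∉ F, u t k = 0)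
    (hconj : ∀ k, u t (-k) = starRingEnd ℂ (u t k))
    (heq : ∀ k ∈ F, HasDerivWithinAt (fun τ => u τ k) (galerkinField S (u t) k) J t) :
    HasDerivWithinAt (fun τ => sobolevEnergy F s (u τ))
      (2 * (Complex.I * triadForm F S s (u t)).re) J t := by
  have termwise := HasDerivWithinAt.fun_sum fun k hk =>
    (heq k hk).norm_sq.const_mul (|(k : ℝ)| ^ (2 * s))
  refine termwise.congr_deriv ?_
  rw [I_mul_triadForm hF hsupp hconj, Complex.re_sum, Finset.mul_sum]
  refine Finset.sum_congr rfl fun k _ => ?_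
  rw [Complex.re_ofReal_mul, Complex.inner]
  ring

end EnergyIdentity

section Riccati

variable {J : Set ℝ} {K a b : ℝ}

lemma mul_one_sub_le_of_abs_deriv_le_mul_sq {y y' : ℝ → ℝ} (hJ : Convex ℝ J)
    (hpos : ∀ t ∈ J, 0 < y t) (hderiv : ∀ t ∈ J, HasDerivWithinAt y (y' t) J t)
    (hbound : ∀ t ∈ J, |y' t| ≤ K * y t ^ 2) (ha : a ∈ J) (hb : b ∈ J) :
    y b * (1 - K * y a * |b - a|) ≤ y a := by
  have inv_deriv_le : ∀ t ∈ J, ‖-y' t / y t ^ 2‖ ≤ K := fun t ht => by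
    rw [norm_div, norm_neg, norm_pow, Real.norm_eq_abs, Real.norm_eq_abs, sq_abs,
      div_le_iff₀ (pow_pos (hpos t ht) 2)]
    exact hbound t ht
  have inv_sub_le := Convex.norm_image_sub_le_of_norm_hasDerivWithin_le
    (fun t ht => (hderiv t ht).inv (hpos t ht).ne') inv_deriv_le hJ ha hb
  have inv_le : (y a)⁻¹ - K * |b - a| ≤ (y b)⁻¹ := by
    simp only [Pi.inv_apply, Real.norm_eq_abs] at inv_sub_le
    linarith [(abs_le.1 inv_sub_le).1]
  have hya := hpos a ha
  have hyb := hpos b hb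
  calc y b * (1 - K * y a * |b - a|) = y b * y a * ((y a)⁻¹ - K * |b - a|) := by field_simp
    _ ≤ y b * y a * (y b)⁻¹ := by gcongr
    _ = y a := by field_simp

lemma sqrt_mul_one_sub_le_of_abs_deriv_le {E E' : ℝ → ℝ} (hJ : Convex ℝ J) (hK : 0 ≤ K)
    (hE : ∀ t ∈ J, 0 ≤ E t) (hderiv : ∀ t ∈ J, HasDerivWithinAt E (E' t) J t)
    (hbound : ∀ t ∈ J, |E' t| ≤ 2 * (K * (√(E t) * E t))) (ha : a ∈ J) (hb : b ∈ J) :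
    √(E b) * (1 - K * √(E a) * |b - a|) ≤ √(E a) := by
  -- Shifting `E` by `ε` keeps the square root differentiable where `E` vanishes.
  have shifted (ε : ℝ) (hε : 0 < ε) :
      √(E b + ε) * (1 - K * √(E a + ε) * |b - a|) ≤ √(E a + ε) := by
    have hpos : ∀ t ∈ J, 0 < E t + ε := fun t ht => add_pos_of_nonneg_of_pos (hE t ht) hε
    refine mul_one_sub_le_of_abs_deriv_le_mul_sq (y := fun t => √(E t + ε)) hJ
      (fun t ht => Real.sqrt_pos.2 (hpos t ht))
      (fun t ht => ((hderiv t ht).add_const ε).sqrt (hpos t ht).ne') (fun t ht => ?_) ha hb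
    have hy : 0 < √(E t + ε) := Real.sqrt_pos.2 (hpos t ht)
    rw [abs_div, abs_of_pos (mul_pos two_pos hy), div_le_iff₀ (mul_pos two_pos hy)]
    calc |E' t| ≤ 2 * (K * (√(E t) * E t)) := hbound t ht
      _ ≤ 2 * (K * (√(E t + ε) * (E t + ε))) := by
        have := hE t ht
        gcongr <;> linarith
      _ = K * √(E t + ε) ^ 2 * (2 * √(E t + ε)) := by
        rw [Real.sq_sqrt (hpos t ht).le]
        ring
  have left_lim : Filter.Tendsto (fun ε => √(E b + ε) * (1 - K * √(E a + ε) * |b - a|))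
      (nhdsWithin 0 (Set.Ioi 0)) (nhds (√(E b) * (1 - K * √(E a) * |b - a|))) :=
    (Continuous.tendsto' (by fun_prop) _ _ (by simp only [add_zero])).mono_left nhdsWithin_le_nhds
  have right_lim : Filter.Tendsto (fun ε => √(E a + ε)) (nhdsWithin 0 (Set.Ioi 0))
      (nhds √(E a)) :=
    (Continuous.tendsto' (by fun_prop) _ _ (by simp only [add_zero])).mono_left nhdsWithin_le_nhds
  exact le_of_tendsto_of_tendsto left_lim right_lim
    (Filter.eventually_of_mem self_mem_nhdsWithin shifted)

end Riccati

theorem galerkin_gronwall_bound_general {S : ℤ → ℤ → ℤ → ℂ} {C μ s Cs Ks : ℝ}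
    (hScyc : ∀ k m n : ℤ, S k m n = S m n k)
    (hSbound : ∀ k m n : ℤ, ‖S k m n‖ ≤ C * |(n : ℝ)| ^ μ)
    (hs : μ + 3 / 2 < s) (hCs : IsTriadWeightBound s Cs)
    (hKs : Ks = C * Cs * Mconst (s - μ - 1))
    {F : Finset ℤ} (hF : ∀ k ∈ F, -k ∈ F)
    {J : Set ℝ} (hJ : Convex ℝ J) (h0 : 0 ∈ J) {u : ℝ → ℤ → ℂ}
    (hsupp : ∀ t ∈ J, ∀ k ∉ F, u t k = 0) (hzero : ∀ t ∈ J, u t 0 = 0)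
    (hconj : ∀ t ∈ J, ∀ k, u t (-k) = starRingEnd ℂ (u t k))
    (heq : ∀ t ∈ J, ∀ k ∈ F,
      HasDerivWithinAt (fun τ => u τ k) (galerkinField S (u t) k) J t)
    {t : ℝ} (ht : t ∈ J) (hlt : Ks * hnorm s (u 0) * |t| < 1) :
    hnorm s (u t) ≤ hnorm s (u 0) / (1 - Ks * hnorm s (u 0) * |t|) := by
  have Ks_nonneg : 0 ≤ Ks := by
    rw [hKs]
    exact mul_nonneg (mul_nonneg (nonneg_of_norm_le_mul_rpow hSbound) hCs.nonneg)
      (Real.sqrt_nonneg _)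
  have energy_deriv_le : ∀ τ ∈ J, |2 * (Complex.I * triadForm F S s (u τ)).re| ≤
      2 * (Ks * (√(sobolevEnergy F s (u τ)) * sobolevEnergy F s (u τ))) := fun τ hτ => by
    have re_le := Complex.abs_re_le_norm (Complex.I * triadForm F S s (u τ))
    rw [norm_mul, Complex.norm_I, one_mul] at re_le
    rw [abs_mul, abs_two, hKs]
    gcongr
    exact re_le.trans (norm_triadForm_le hScyc hSbound hs hCs (hzero τ hτ))
  have riccati := sqrt_mul_one_sub_le_of_abs_deriv_le hJ Ks_nonneg
    (fun _ _ => sobolevEnergy_nonneg)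
    (fun τ hτ => hasDerivWithinAt_sobolevEnergy hF (hsupp τ hτ) (hconj τ hτ) (heq τ hτ))
    energy_deriv_le h0 ht
  rw [← hnorm_eq_sqrt_sobolevEnergy (hsupp t ht), ← hnorm_eq_sqrt_sobolevEnergy (hsupp 0 h0),
    sub_zero] at riccati
  exact (le_div_iff₀ (sub_pos.2 hlt)).2 riccati

/-- Gronwall bound for the Galerkin approximations: on `|t| < 1/(K_s ‖g‖_s)`,
`‖u(t)‖_s ≤ ‖g‖_s / (1 − K_s ‖g‖_s |t|)` where `g = u(·,0)`. -/
theorem galerkin_gronwall_bound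
    (μ : ℝ) (hμ : 0 ≤ μ) (S : ℤ → ℤ → ℤ → ℂ)
    (hS0 : ∀ k m n : ℤ, k * m * n = 0 → S k m n = 0)
    (hSsym : ∀ k m n : ℤ, S k m n = S k n m)
    (hScyc : ∀ k m n : ℤ, S k m n = S m n k)
    (hSreal : ∀ k m n : ℤ, S k m n = starRingEnd ℂ (S (-k) (-m) (-n)))
    (C : ℝ) (hC : 0 < C)
    (hSbound : ∀ k m n : ℤ, ‖S k m n‖ ≤
      C * min (|(k : ℝ)| ^ μ) (min (|(m : ℝ)| ^ μ) (|(n : ℝ)| ^ μ)))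
    (s : ℝ) (hs : μ + 3 / 2 < s)
    (Cs : ℝ)
    (hCs : ∀ k m n : ℝ, k + m + n = 0 →
      |k * |k| ^ (2 * s) + m * |m| ^ (2 * s) + n * |n| ^ (2 * s)| ≤
        Cs * (|k| ^ s * |m| ^ s * |n| + |n| ^ s * |k| ^ s * |m| + |m| ^ s * |n| ^ s * |k|))
    (Ks : ℝ) (hKs : Ks = C * Cs * Mconst (s - μ - 1))
    (N : ℕ) (u : ℝ → ℤ → ℂ)
    (hsupp : ∀ t : ℝ, ∀ k : ℤ, (N : ℤ) < |k| → u t k = 0)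
    (hzero : ∀ t : ℝ, u t 0 = 0)
    (hconj : ∀ t : ℝ, ∀ k : ℤ, u t (-k) = starRingEnd ℂ (u t k))
    (heq : ∀ t : ℝ, ∀ k : ℤ, |k| ≤ (N : ℤ) →
      HasDerivAt (fun τ => u τ k)
        (-(Complex.I * (k : ℂ) * ∑' n : ℤ, S (-k) (k - n) n * u t (k - n) * u t n)) t) :
    ∀ t : ℝ, |t| < 1 / (Ks * hnorm s (u 0)) →
      hnorm s (u t) ≤ hnorm s (u 0) / (1 - Ks * hnorm s (u 0) * |t|) := by
  intro t ht
  have hlt : Ks * hnorm s (u 0) * |t| < 1 :=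
    (lt_div_iff₀' (one_div_pos.1 ((abs_nonneg t).trans_lt ht))).1 ht
  have mem_modes (k : ℤ) : k ∈ Finset.Icc (-(N : ℤ)) N ↔ |k| ≤ N := by
    rw [Finset.mem_Icc, abs_le]
  have kernel_le (k m n : ℤ) : ‖S k m n‖ ≤ C * |(n : ℝ)| ^ μ :=
    (hSbound k m n).trans (by gcongr; exact (min_le_right _ _).trans (min_le_right _ _))
  exact galerkin_gronwall_bound_general hScyc kernel_le hs hCs hKs
    (fun k hk => by rwa [mem_modes, abs_neg, ← mem_modes]) convex_univ (Set.mem_univ 0)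
    (fun t _ k hk => hsupp t k (by rwa [mem_modes, not_le] at hk)) (fun t _ => hzero t)
    (fun t _ => hconj t) (fun t _ k hk => (heq t k ((mem_modes k).1 hk)).hasDerivWithinAt)
    (Set.mem_univ t) hlt
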